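/- Let 4 ≤ p < q, n = p + q, and suppose 2p > q + 4. Every tree T ∈ 𝒯_n^{p,q} that is isomorphic to none of B_{p,q}^{0,0}, B_{p,q}^{0,1}, D_{p,q}^{0,1}, B_{p,q}^{2,0} satisfies T ≺_s B_{p,q}^{2,0}; that is, in this case B_{p,q}^{2,0} is the unique fourth last tree in the S-order among 𝒯_n^{p,q}. -/

import Mathlib

open SimpleGraph

open scoped Classical in
/-- The adjacency matrix of a simple graph, with real entries. -/
noncomputable def adjMat {V : Type*} [Fintype V] (G : SimpleGraph V) : Matrix V V ℝ :=
  Matrix.of fun a b => if G.Adj a b then 1 else 0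

/-- The `k`-th spectral moment `S_k(G) = tr(A(G)^k)`. -/
noncomputable def spectralMoment {V : Type*} [Fintype V] [DecidableEq V]
    (G : SimpleGraph V) (k : ℕ) : ℝ :=
  Matrix.trace (adjMat G ^ k)

/-- `SLt G₁ G₂` means `G₁ ≺_s G₂`: for some `k` with `1 ≤ k ≤ n - 1`,
`S_i(G₁) = S_i(G₂)` for all `i < k` and `S_k(G₁) < S_k(G₂)`. -/
def SLt {V : Type*} [Fintype V] [DecidableEq V] (G₁ G₂ : SimpleGraph V) : Prop :=
  ∃ k : ℕ, 1 ≤ k ∧ k ≤ Fintype.card V - 1 ∧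
    (∀ i < k, spectralMoment G₁ i = spectralMoment G₂ i) ∧
    spectralMoment G₁ k < spectralMoment G₂ k

/-- The tree `B_{p,q}^{k,l}` on `p + q` vertices: vertex `0 = u` is adjacent to `1 = v`
and to the `q - 1` vertices `2, …, q`; the distinguished neighbor `2` of `u` carries the
`k` pendant leaves `q+1, …, q+k`; the `l` neighbors `3, …, l+2` of `u` carry one pendant
leaf each (`q+k+j` is attached to `j+2` for `1 ≤ j ≤ l`); and `v` carries the
`p - k - l - 1` pendant leaves `q+k+l+1, …, p+q-1`. -/
def BTree (p q k l : ℕ) : SimpleGraph (Fin (p + q)) :=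
  SimpleGraph.fromRel (fun a b =>
    (a.val = 0 ∧ b.val = 1) ∨
    (a.val = 0 ∧ 2 ≤ b.val ∧ b.val ≤ q) ∨
    (a.val = 2 ∧ q + 1 ≤ b.val ∧ b.val ≤ q + k) ∨
    (q + k + 1 ≤ b.val ∧ b.val ≤ q + k + l ∧ a.val = b.val - (q + k) + 2) ∨
    (a.val = 1 ∧ q + k + l + 1 ≤ b.val))

/-- The tree `D_{p,q}^{k,l}` on `p + q` vertices: vertex `1 = v` is adjacent to `0 = u`
and to the `p - 1` vertices `2, …, p`; the distinguished neighbor `2` of `v` carries the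
`k` pendant leaves `p+1, …, p+k`; the `l` neighbors `3, …, l+2` of `v` carry one pendant
leaf each; and `u` carries the `q - k - l - 1` pendant leaves `p+k+l+1, …, p+q-1`. -/
def DTree (p q k l : ℕ) : SimpleGraph (Fin (p + q)) :=
  SimpleGraph.fromRel (fun a b =>
    (a.val = 0 ∧ b.val = 1) ∨
    (a.val = 1 ∧ 2 ≤ b.val ∧ b.val ≤ p) ∨
    (a.val = 2 ∧ p + 1 ≤ b.val ∧ b.val ≤ p + k) ∨
    (p + k + 1 ≤ b.val ∧ b.val ≤ p + k + l ∧ a.val = b.val - (p + k) + 2) ∨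
    (a.val = 0 ∧ p + k + l + 1 ≤ b.val))

/-- `T ∈ 𝒯_{p+q}^{p,q}`: `T` is a tree on `p + q` vertices with a `(p,q)`-bipartition. -/
def TreeBip (p q : ℕ) (G : SimpleGraph (Fin (p + q))) : Prop :=
  G.IsTree ∧ ∃ A : Finset (Fin (p + q)), A.card = p ∧
    ∀ ⦃x y : Fin (p + q)⦄, G.Adj x y → (x ∈ A ↔ y ∉ A)

/-!
All trees on `n` vertices share `S_0, …, S_3`, and `S_4 = 2 ∑ d² - ∑ d` for the vertex degrees `d`,
so a larger sum of squared degrees means a later place in the S-order. Over a colour class of size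
`m` of a tree the excesses `d - 1` sum to `n - m - 1`. Natural numbers with sum `k + 2` that are not
`(k + 2, 0)`, `(k + 1, 1)` or `(k, 2)` up to zeros have a sum of squares below `k² + 4`, and a tree
with a single positive excess in one class is determined by its excesses in the other if at most two
of them are positive. Comparing the excesses of both classes, the sum of squares of every tree other
than the four exceptional ones falls short of that of `B_{p,q}^{2,0}`.
-/

section SpectralMoments

variable {V : Type*} [Fintype V] {G H : SimpleGraph V}

theorem adjMat_eq_adjMatrix [DecidableRel G.Adj] : adjMat G = G.adjMatrix ℝ := by
  ext a b
  simp [adjMat, adjMatrix_apply]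

theorem card_commonNeighbors_self [DecidableRel G.Adj] (v : V) :
    Fintype.card (G.commonNeighbors v v) = G.degree v := by
  rw [← card_neighborSet_eq_degree]
  exact Fintype.card_congr (Equiv.setCongr (Set.inter_self _))

theorem card_commonNeighbors_le_one_of_isAcyclic [DecidableRel G.Adj]
    (hG : G.IsAcyclic) {a b : V} (hab : a ≠ b) : Fintype.card (G.commonNeighbors a b) ≤ 1 := by
  have isPath_through {v : V} (hav : G.Adj a v) (hbv : G.Adj b v) :
      (Walk.cons hav (Walk.cons hbv.symm Walk.nil)).IsPath := by
    simp [hab, hav.ne, hbv.ne']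
  rw [Fintype.card_le_one_iff]
  rintro ⟨v, hav, hbv⟩ ⟨w, haw, hbw⟩
  have heq := (hG.subsingleton_path a b).elim
    ⟨_, isPath_through hav hbv⟩ ⟨_, isPath_through haw hbw⟩
  exact Subtype.ext (congrArg (fun P : G.Path a b => (P : G.Walk a b).snd) heq)

theorem adjMat_sq_apply [DecidableEq V] [DecidableRel G.Adj] (a b : V) :
    (adjMat G ^ 2) a b = Fintype.card (G.commonNeighbors a b) := by
  rw [adjMat_eq_adjMatrix, adjMatrix_pow_apply_eq_card_walk]
  exact congrArg _ (Fintype.card_congr (walkLengthTwoEquivCommonNeighbors G a b))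

theorem sum_sum_card_commonNeighbors [DecidableRel G.Adj] :
    ∑ a, ∑ b, (Fintype.card (G.commonNeighbors a b) : ℝ) = ∑ v, (G.degree v : ℝ) ^ 2 := by
  classical
  calc ∑ a, ∑ b, (Fintype.card (G.commonNeighbors a b) : ℝ)
      = ∑ a, ∑ b, ∑ v, G.adjMatrix ℝ a v * G.adjMatrix ℝ v b := by
        simp only [← adjMat_sq_apply, adjMat_eq_adjMatrix, pow_two, Matrix.mul_apply]
    _ = ∑ v, (∑ a, G.adjMatrix ℝ a v) * ∑ b, G.adjMatrix ℝ v b := by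
        simp only [Finset.sum_mul_sum]
        rw [Finset.sum_comm_cycle]
    _ = ∑ v, (G.degree v : ℝ) ^ 2 := by
        simp [adjMatrix_apply, G.adj_comm _, pow_two, ← neighborFinset_eq_filter]

variable [DecidableEq V]

theorem spectralMoment_eq_sum_card_walk [DecidableRel G.Adj] (k : ℕ) :
    spectralMoment G k = ∑ v, (Fintype.card {w : G.Walk v v | w.length = k} : ℝ) := by
  simp only [spectralMoment, adjMat_eq_adjMatrix, Matrix.trace, Matrix.diag_apply,
    adjMatrix_pow_apply_eq_card_walk]

theorem spectralMoment_nonneg (k : ℕ) : 0 ≤ spectralMoment G k := by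
  classical
  rw [spectralMoment_eq_sum_card_walk]
  positivity

theorem spectralMoment_eq_zero_of_odd (hG : G.IsBipartite) {k : ℕ} (hk : Odd k) :
    spectralMoment G k = 0 := by
  classical
  rw [spectralMoment_eq_sum_card_walk]
  refine Finset.sum_eq_zero fun v _ => ?_
  rw [Nat.cast_eq_zero, Fintype.card_eq_zero_iff]
  refine ⟨fun ⟨w, hw⟩ => Nat.not_even_iff_odd.mpr hk ?_⟩
  exact hw ▸ two_colorable_iff_forall_loop_even.mp hG v w

theorem spectralMoment_zero : spectralMoment G 0 = Fintype.card V := by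
  simp [spectralMoment]

theorem spectralMoment_one : spectralMoment G 1 = 0 := by
  classical
  rw [spectralMoment, pow_one, adjMat_eq_adjMatrix, trace_adjMatrix]

theorem spectralMoment_two [DecidableRel G.Adj] :
    spectralMoment G 2 = ∑ v, (G.degree v : ℝ) := by
  simp only [spectralMoment, Matrix.trace, Matrix.diag_apply, adjMat_sq_apply,
    card_commonNeighbors_self]

theorem spectralMoment_four [DecidableRel G.Adj] :
    spectralMoment G 4 = ∑ a, ∑ b, (Fintype.card (G.commonNeighbors a b) : ℝ) ^ 2 := by
  rw [spectralMoment, show 4 = 2 + 2 from rfl, pow_add]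
  simp only [Matrix.trace, Matrix.diag_apply, Matrix.mul_apply, adjMat_sq_apply]
  refine Finset.sum_congr rfl fun a _ => Finset.sum_congr rfl fun b _ => ?_
  rw [pow_two]
  simp only [G.commonNeighbors_symm b a]

/- The last sum counts the closed walks of length four that run around a four-cycle. -/
theorem spectralMoment_four_add_sum_degree [DecidableRel G.Adj] :
    spectralMoment G 4 + ∑ v, (G.degree v : ℝ) = 2 * ∑ v, (G.degree v : ℝ) ^ 2 +
      ∑ a, ∑ b, if a = b then 0 else
        ((Fintype.card (G.commonNeighbors a b)).descFactorial 2 : ℝ) := by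
  have hsplit (a b : V) : (Fintype.card (G.commonNeighbors a b) : ℝ) ^ 2 +
      (if a = b then (G.degree a : ℝ) else 0) =
      Fintype.card (G.commonNeighbors a b) + (if a = b then (G.degree a : ℝ) ^ 2 else 0) +
      if a = b then 0 else ((Fintype.card (G.commonNeighbors a b)).descFactorial 2 : ℝ) := by
    split_ifs with hab
    · subst hab
      rw [card_commonNeighbors_self]
      ring
    · rw [Nat.cast_descFactorial_two]
      ring
  have hsum := Finset.sum_congr rfl fun a (_ : a ∈ Finset.univ) =>
    Finset.sum_congr rfl fun b (_ : b ∈ Finset.univ) => hsplit a b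
  simp only [Finset.sum_add_distrib, Finset.sum_ite_eq, Finset.mem_univ, if_true,
    sum_sum_card_commonNeighbors] at hsum
  rw [spectralMoment_four, hsum]
  ring

theorem two_mul_sum_sq_degree_le_spectralMoment_four_add [DecidableRel G.Adj] :
    2 * ∑ v, (G.degree v : ℝ) ^ 2 ≤ spectralMoment G 4 + ∑ v, (G.degree v : ℝ) := by
  rw [spectralMoment_four_add_sum_degree]
  exact le_add_of_nonneg_right (by positivity)

theorem spectralMoment_four_of_isAcyclic [DecidableRel G.Adj] (hG : G.IsAcyclic) :
    spectralMoment G 4 + ∑ v, (G.degree v : ℝ) = 2 * ∑ v, (G.degree v : ℝ) ^ 2 := by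
  rw [spectralMoment_four_add_sum_degree, add_eq_left]
  refine Finset.sum_eq_zero fun a _ => Finset.sum_eq_zero fun b _ => ?_
  split_ifs with hab
  · rfl
  · rw [Nat.descFactorial_of_lt (Nat.lt_succ_of_le
      (card_commonNeighbors_le_one_of_isAcyclic hG hab)), Nat.cast_zero]

theorem sLt_of_isAcyclic_of_sum_sq_degree_lt [DecidableRel G.Adj] [DecidableRel H.Adj]
    (hG : G.IsAcyclic) (hV : 5 ≤ Fintype.card V)
    (hdeg : ∑ v, G.degree v = ∑ v, H.degree v)
    (hsq : ∑ v, G.degree v ^ 2 < ∑ v, H.degree v ^ 2) : SLt G H := by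
  have hG3 : spectralMoment G 3 = 0 := spectralMoment_eq_zero_of_odd hG.isBipartite (by decide)
  have hlt : ∀ i < 3, spectralMoment G i = spectralMoment H i := by
    intro i hi
    interval_cases i
    · rw [spectralMoment_zero, spectralMoment_zero]
    · rw [spectralMoment_one, spectralMoment_one]
    · rw [spectralMoment_two, spectralMoment_two]
      exact_mod_cast hdeg
  rcases (spectralMoment_nonneg (G := H) 3).eq_or_lt' with hH3 | hH3
  · refine ⟨4, by omega, by omega, fun i hi => ?_, ?_⟩
    · rcases (Nat.le_of_lt_succ hi).eq_or_lt with rfl | hi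
      · rw [hG3, hH3]
      · exact hlt i hi
    · have hdegR : ∑ v, (G.degree v : ℝ) = ∑ v, (H.degree v : ℝ) := by exact_mod_cast hdeg
      have hsqR : ∑ v, (G.degree v : ℝ) ^ 2 < ∑ v, (H.degree v : ℝ) ^ 2 := by exact_mod_cast hsq
      linarith [spectralMoment_four_of_isAcyclic hG,
        two_mul_sum_sq_degree_le_spectralMoment_four_add (G := H)]
  · exact ⟨3, by omega, by omega, hlt, hG3.trans_lt hH3⟩

end SpectralMoments

section BlowUps

variable {ι V : Type*} {G : SimpleGraph V}

/-- The blow-up of `H` with class sizes `n`: the vertex `i` of `H` is replaced by `n i` pairwise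
nonadjacent copies. -/
abbrev blowup (H : SimpleGraph ι) (n : ι → ℕ) : SimpleGraph (Σ i, Fin (n i)) :=
  H.comap Sigma.fst

theorem nonempty_iso_blowup [Fintype V] [DecidableEq ι] {H : SimpleGraph ι} {n : ι → ℕ}
    (label : V → ι) (hadj : ∀ a b, G.Adj a b ↔ H.Adj (label a) (label b))
    (hcard : ∀ i, Fintype.card {a // label a = i} = n i) : Nonempty (G ≃g blowup H n) := by
  have hfiber (i : ι) : Nonempty ({a // label a = i} ≃ {b : Σ i, Fin (n i) // b.1 = i}) :=
    ⟨(Fintype.equivFinOfCardEq (hcard i)).trans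
      (Equiv.sigmaSubtype (β := fun i => Fin (n i)) i).symm⟩
  let e := Equiv.ofFiberEquiv fun i => (hfiber i).some
  refine ⟨⟨e, fun {a b} => ?_⟩⟩
  have hfst (v : V) : (e v).1 = label v := Equiv.ofFiberEquiv_map _ v
  rw [hadj, comap_adj, hfst, hfst]

theorem degree_blowup [Fintype ι] {H : SimpleGraph ι} [DecidableRel H.Adj] {n : ι → ℕ}
    (i : ι) (x : Fin (n i)) :
    (blowup H n).degree ⟨i, x⟩ = ∑ j, if H.Adj i j then n j else 0 := by
  rw [← Nat.cast_id ((blowup H n).degree ⟨i, x⟩), degree_eq_sum_if_adj, Fintype.sum_sigma]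
  simp only [comap_adj, Finset.sum_const, Finset.card_univ, Fintype.card_fin, smul_eq_mul,
    mul_ite, mul_one, mul_zero]

theorem sum_degree_of_iso_blowup [Fintype V] [DecidableRel G.Adj] [Fintype ι] {H : SimpleGraph ι}
    [DecidableRel H.Adj] {n : ι → ℕ} (e : G ≃g blowup H n) (φ : ℕ → ℕ) :
    ∑ v, φ (G.degree v) = ∑ i, n i * φ (∑ j, if H.Adj i j then n j else 0) := by
  rw [Fintype.sum_equiv e.toEquiv _ (fun w => φ ((blowup H n).degree w))
    (fun v => congrArg φ (e.degree_eq v).symm), Fintype.sum_sigma]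
  refine Finset.sum_congr rfl fun i _ => ?_
  rw [Finset.sum_eq_card_nsmul fun x _ => congrArg φ (degree_blowup i x), Finset.card_univ,
    Fintype.card_fin, smul_eq_mul]

/-- A centre `inl 0` with neighbours `inr 0`, `inr 1`, `inr 2`, of which `inr 1` and `inr 2` have
one further neighbour each, `inl 1` and `inl 2`. The two summands are the colour classes. -/
def threeStarPattern : SimpleGraph (Fin 3 ⊕ Fin 3) where
  Adj
    | .inl i, .inr j | .inr j, .inl i => i = 0 ∨ i = j
    | _, _ => False
  symm := ⟨by rintro (i | i) (j | j) <;> exact id⟩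
  loopless := ⟨by rintro (i | i) <;> exact id⟩

theorem threeStarPattern_adj_inl_inr {i j : Fin 3} :
    threeStarPattern.Adj (.inl i) (.inr j) ↔ i = 0 ∨ i = j :=
  Iff.rfl

/-- The tree obtained by attaching `r` leaves to the middle vertex and `s` and `t` leaves to the two
end vertices of a path on three vertices. -/
abbrev threeStar (r s t : ℕ) :
    SimpleGraph (Σ i, Fin ((Sum.elim ![1, s, t] ![r, 1, 1] : Fin 3 ⊕ Fin 3 → ℕ) i)) :=
  blowup threeStarPattern (Sum.elim ![1, s, t] ![r, 1, 1])

theorem sum_degree_of_iso_threeStar [Fintype V] [DecidableRel G.Adj] {r s t : ℕ}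
    (e : G ≃g threeStar r s t) (φ : ℕ → ℕ) :
    ∑ v, φ (G.degree v) = φ (r + 2) + φ (s + 1) + φ (t + 1) + (r + s + t) * φ 1 := by
  classical
  rw [sum_degree_of_iso_blowup e]
  simp [Fin.sum_univ_three, threeStarPattern]
  ring_nf

end BlowUps

section ColorClasses

variable {V : Type*} {G : SimpleGraph V}

/-- `A` and its complement are the two colour classes of a proper `2`-colouring of `G`. -/
def IsColorClass (G : SimpleGraph V) (A : Finset V) : Prop :=
  ∀ ⦃a b : V⦄, G.Adj a b → (a ∈ A ↔ b ∉ A)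

theorem IsColorClass.compl [Fintype V] [DecidableEq V] {A : Finset V} (hA : IsColorClass G A) :
    IsColorClass G Aᶜ := fun a b hab => by
  rw [Finset.mem_compl, Finset.mem_compl, hA hab]

theorem IsColorClass.isBipartiteWith [Fintype V] [DecidableEq V] {A : Finset V}
    (hA : IsColorClass G A) : G.IsBipartiteWith (A : Set V) (Aᶜ : Finset V) where
  disjoint := Finset.disjoint_coe.mpr disjoint_compl_right
  mem_of_adj a b hab := by
    have := hA hab
    simp only [Finset.mem_coe, Finset.mem_compl]
    tauto

theorem nonempty_iso_threeStar [Fintype V] [DecidableEq V] {r s t : ℕ} {C X : Finset V}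
    {c x y : V} (hC : IsColorClass G C) (hc : c ∈ C) (hx : x ∉ C) (hy : y ∉ C) (hxy : x ≠ y)
    (hX : X ⊆ C.erase c)
    (hadj : ∀ a ∈ C, ∀ b ∉ C, G.Adj a b ↔ a = c ∨ a ∈ X ∧ b = x ∨ a ∉ X ∧ b = y)
    (hcardX : X.card = s) (hcardC : C.card = s + t + 1) (hcardCc : Cᶜ.card = r + 2) :
    Nonempty (G ≃g threeStar r s t) := by
  let label (z : V) : Fin 3 ⊕ Fin 3 :=
    if z ∈ C then .inl (if z = c then 0 else if z ∈ X then 1 else 2)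
    else .inr (if z = x then 1 else if z = y then 2 else 0)
  have hlabel : ∀ a ∈ C, ∀ b ∉ C, G.Adj a b ↔ threeStarPattern.Adj (label a) (label b) := by
    intro a ha b hb
    simp only [hadj a ha b hb, label, if_pos ha, if_neg hb, threeStarPattern_adj_inl_inr]
    grind
  refine nonempty_iso_blowup label (fun a b => ?_) ?_
  · by_cases ha : a ∈ C <;> by_cases hb : b ∈ C
    · simpa [label, threeStarPattern, ha, hb] using fun h : G.Adj a b => (hC h).mp ha hb
    · exact hlabel a ha b hb
    · rw [G.adj_comm, threeStarPattern.adj_comm]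
      exact hlabel b hb a ha
    · simpa [label, threeStarPattern, ha, hb] using fun h : G.Adj a b => ha ((hC h).mpr hb)
  · have hrest : ((C.erase c) \ X).card = t := by
      rw [Finset.card_sdiff_of_subset hX, Finset.card_erase_of_mem hc]
      omega
    have hleaves : ((Cᶜ.erase x).erase y).card = r := by
      rw [Finset.card_erase_of_mem (by simp [hy, hxy.symm]),
        Finset.card_erase_of_mem (by simp [hx])]
      omega
    rintro (i | i) <;> fin_cases i
    · exact Fintype.card_of_subtype {c} (by grind)
    · exact hcardX ▸ Fintype.card_of_subtype X (by grind)
    · exact hrest ▸ Fintype.card_of_subtype (C.erase c \ X) (by grind)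
    · exact hleaves ▸ Fintype.card_of_subtype ((Cᶜ.erase x).erase y) (by grind [Finset.mem_compl])
    · exact Fintype.card_of_subtype {x} (by grind)
    · exact Fintype.card_of_subtype {y} (by grind)

end ColorClasses

section Caterpillars

theorem card_filter_lt_val (n m : ℕ) :
    (Finset.univ.filter fun a : Fin n => m < a.val).card = n - (m + 1) := by
  have hcompl : (Finset.univ.filter fun a : Fin n => m < a.val) =
      (Finset.univ.filter fun a : Fin n => a.val < m + 1)ᶜ := by
    ext a
    simp
  rw [hcompl, Finset.card_compl, Fin.card_filter_val_lt, Fintype.card_fin]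
  omega

theorem nonempty_iso_threeStar_of_val {n r s t c x y : ℕ} {G : SimpleGraph (Fin n)}
    (hn : n = r + s + t + 3) (hc : c ≤ r + 2) (hx : x ≤ r + 2) (hy : y ≤ r + 2)
    (hcx : c ≠ x) (hcy : c ≠ y) (hxy : x ≠ y)
    (hadj : ∀ a b : Fin n, G.Adj a b ↔ a ≠ b ∧
      ((a.val = c ∧ b.val ≤ r + 2) ∨ (r + 2 + t < a.val ∧ b.val = x) ∨
          (r + 2 < a.val ∧ a.val ≤ r + 2 + t ∧ b.val = y) ∨
        (b.val = c ∧ a.val ≤ r + 2) ∨ (r + 2 + t < b.val ∧ a.val = x) ∨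
          (r + 2 < b.val ∧ b.val ≤ r + 2 + t ∧ a.val = y))) :
    Nonempty (G ≃g threeStar r s t) := by
  have hlt {i : ℕ} (hi : i ≤ r + 2) : i < n := by omega
  let C : Finset (Fin n) := insert ⟨c, hlt hc⟩ (Finset.univ.filter fun a => r + 2 < a.val)
  let X : Finset (Fin n) := Finset.univ.filter fun a => r + 2 + t < a.val
  have mem_C (a : Fin n) : a ∈ C ↔ a.val = c ∨ r + 2 < a.val := by simp [C, Fin.ext_iff]
  have mem_X (a : Fin n) : a ∈ X ↔ r + 2 + t < a.val := by simp [X]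
  have hcardC : C.card = s + t + 1 := by
    rw [Finset.card_insert_of_notMem (by simpa using hc), card_filter_lt_val]
    omega
  have hcardX : X.card = s := by
    rw [card_filter_lt_val]
    omega
  have hcardCc : Cᶜ.card = r + 2 := by
    rw [Finset.card_compl, hcardC, Fintype.card_fin]
    omega
  refine nonempty_iso_threeStar (c := ⟨c, hlt hc⟩) (x := ⟨x, hlt hx⟩) (y := ⟨y, hlt hy⟩)
    (fun a b hab => ?_) (by simp only [mem_C, true_or]) (by simp only [mem_C]; omega)
    (by simp only [mem_C]; omega) (by simpa [Fin.ext_iff] using hxy) (fun a ha => ?_)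
    (fun a ha b hb => ?_) hcardX hcardC hcardCc
  · rw [hadj] at hab
    simp only [mem_C]
    omega
  · rw [mem_X] at ha
    simp only [Finset.mem_erase, ne_eq, mem_C, Fin.ext_iff]
    omega
  · rw [mem_C] at ha hb
    simp only [hadj, mem_X, ne_eq, Fin.ext_iff]
    omega

theorem nonempty_BTree_iso_threeStar (r s k : ℕ) :
    Nonempty (BTree (s + k + 1) (r + 2) k 0 ≃g threeStar r s k) :=
  nonempty_iso_threeStar_of_val (c := 0) (x := 1) (y := 2) (by omega) (by omega) (by omega)
    (by omega) (by omega) (by omega) (by omega) fun a b => by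
      simp only [BTree, fromRel_adj, ne_eq, Fin.ext_iff]
      omega

theorem nonempty_BTree_zero_one_iso_threeStar (r s : ℕ) :
    Nonempty (BTree (s + 2) (r + 3) 0 1 ≃g threeStar (r + 1) s 1) :=
  nonempty_iso_threeStar_of_val (c := 0) (x := 1) (y := 3) (by omega) (by omega) (by omega)
    (by omega) (by omega) (by omega) (by omega) fun a b => by
      simp only [BTree, fromRel_adj, ne_eq, Fin.ext_iff]
      omega

theorem nonempty_DTree_zero_one_iso_threeStar (r s : ℕ) :
    Nonempty (DTree (r + 3) (s + 2) 0 1 ≃g threeStar (r + 1) s 1) :=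
  nonempty_iso_threeStar_of_val (c := 1) (x := 0) (y := 3) (by omega) (by omega) (by omega)
    (by omega) (by omega) (by omega) (by omega) fun a b => by
      simp only [DTree, fromRel_adj, ne_eq, Fin.ext_iff]
      omega

end Caterpillars

section Profiles

variable {α : Type*} {S : Finset α} {f : α → ℕ}

/-- `f` takes the values `a` and `b` at two distinct points of `S` and vanishes on the rest of
`S`. -/
def HasProfile (S : Finset α) (f : α → ℕ) (a b : ℕ) : Prop :=
  ∃ x ∈ S, ∃ y ∈ S, x ≠ y ∧ f x = a ∧ f y = b ∧ ∀ z ∈ S, z ≠ x → z ≠ y → f z = 0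

theorem HasProfile.sum_sq {a b : ℕ} (h : HasProfile S f a b) :
    ∑ z ∈ S, f z ^ 2 = a ^ 2 + b ^ 2 := by
  obtain ⟨x, hx, y, hy, hxy, rfl, rfl, hrest⟩ := h
  exact Finset.sum_eq_add_of_mem x y hx hy hxy fun z hz hne => by
    rw [hrest z hz hne.1 hne.2, zero_pow two_ne_zero]

theorem sq_add_sq_lt_of_three_le {k a b : ℕ} (ha : 3 ≤ a) (hb : 3 ≤ b) (hk : a + b = k + 2) :
    a ^ 2 + b ^ 2 < k ^ 2 + 4 := by
  obtain ⟨a, rfl⟩ := Nat.exists_eq_add_of_le ha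
  obtain ⟨b, rfl⟩ := Nat.exists_eq_add_of_le hb
  obtain rfl : k = a + b + 4 := by omega
  ring_nf
  omega

theorem sq_add_sq_add_mul_lt {k a b c : ℕ} (hb : 1 ≤ b) (hba : b ≤ a) (hc : 1 ≤ c)
    (hk : a + b + c = k + 2) : a ^ 2 + b ^ 2 + b * c < k ^ 2 + 4 := by
  obtain ⟨b, rfl⟩ := Nat.exists_eq_add_of_le' hb
  obtain ⟨a, rfl⟩ := Nat.exists_eq_add_of_le hba
  obtain ⟨c, rfl⟩ := Nat.exists_eq_add_of_le' hc
  obtain rfl : k = 2 * b + a + c + 1 := by omega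
  nlinarith [Nat.le_mul_self b, Nat.zero_le (a * b), Nat.zero_le (b * c), Nat.zero_le (a * c)]

theorem sum_sq_le_mul_sum {m : ℕ} (hm : ∀ z ∈ S, f z ≤ m) :
    ∑ z ∈ S, f z ^ 2 ≤ m * ∑ z ∈ S, f z := by
  rw [Finset.mul_sum]
  refine Finset.sum_le_sum fun z hz => ?_
  rw [pow_two]
  exact Nat.mul_le_mul_right _ (hm z hz)

theorem hasProfile_or_sum_sq_lt {k : ℕ} (hS : 2 ≤ S.card) (hsum : ∑ z ∈ S, f z = k + 2) :
    HasProfile S f (k + 2) 0 ∨ HasProfile S f (k + 1) 1 ∨ HasProfile S f k 2 ∨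
      ∑ z ∈ S, f z ^ 2 < k ^ 2 + 4 := by
  classical
  obtain ⟨x, hx, hxmax⟩ := S.exists_max_image f (Finset.card_pos.mp (by omega))
  obtain ⟨y, hy, hymax⟩ := (S.erase x).exists_max_image f
    (Finset.card_pos.mp (by rw [Finset.card_erase_of_mem hx]; omega))
  obtain ⟨hyx, hyS⟩ := Finset.mem_erase.mp hy
  have sum_eq (g : α → ℕ) : ∑ z ∈ S, g z = g x + g y + ∑ z ∈ (S.erase x).erase y, g z := by
    rw [add_assoc, Finset.add_sum_erase _ _ hy, Finset.add_sum_erase _ _ hx]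
  rw [sum_eq] at hsum
  rw [sum_eq fun z => f z ^ 2]
  rcases Nat.eq_zero_or_pos (∑ z ∈ (S.erase x).erase y, f z) with hzero | hpos
  · have hrest := Finset.sum_eq_zero_iff.mp hzero
    have hprofile : HasProfile S f (f x) (f y) :=
      ⟨x, hx, y, hyS, hyx.symm, rfl, rfl, fun z hz hzx hzy => hrest z (by simp [*])⟩
    rcases lt_or_ge (f y) 3 with hlt | hge
    · interval_cases f y
      · exact .inl ((by omega : f x = k + 2) ▸ hprofile)
      · exact .inr (.inl ((by omega : f x = k + 1) ▸ hprofile))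
      · exact .inr (.inr (.inl ((by omega : f x = k) ▸ hprofile)))
    · rw [Finset.sum_eq_zero fun z hz => by rw [hrest z hz, zero_pow two_ne_zero], add_zero]
      exact .inr (.inr (.inr
        (sq_add_sq_lt_of_three_le (hge.trans (hxmax y hyS)) hge (by omega))))
  · have hle : ∀ z ∈ (S.erase x).erase y, f z ≤ f y := fun z hz =>
      hymax z (Finset.mem_of_mem_erase hz)
    have hfy : 1 ≤ f y := by
      obtain ⟨z, hz, hfz⟩ := Finset.exists_ne_zero_of_sum_ne_zero hpos.ne'
      exact (Nat.one_le_iff_ne_zero.mpr hfz).trans (hle z hz)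
    exact .inr (.inr (.inr ((Nat.add_le_add_left (sum_sq_le_mul_sum hle) _).trans_lt
      (sq_add_sq_add_mul_lt hfy (hxmax y hyS) hpos hsum))))

end Profiles

section Excess

variable {V : Type*} [Fintype V] {G : SimpleGraph V} [DecidableRel G.Adj]

/-- The degree of `v` minus one, truncated to `0` at an isolated vertex. In a tree the excesses of
one colour class sum to one less than the size of the other. -/
def excess (G : SimpleGraph V) [DecidableRel G.Adj] (v : V) : ℕ :=
  G.degree v - 1

theorem degree_eq_excess_add_one [Nontrivial V] (hG : G.Preconnected) (v : V) :
    G.degree v = excess G v + 1 :=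
  (Nat.sub_add_cancel (hG.degree_pos_of_nontrivial v)).symm

theorem sum_degree_of_isTree (hG : G.IsTree) :
    ∑ v, G.degree v + 2 = 2 * Fintype.card V := by
  classical
  rw [sum_degrees_eq_twice_card_edges, ← hG.card_edgeFinset]
  ring

theorem sum_sq_degree_of_isTree [Nontrivial V] (hG : G.IsTree) :
    ∑ v, G.degree v ^ 2 + 4 = ∑ v, excess G v ^ 2 + 3 * Fintype.card V := by
  have hsq (v : V) : G.degree v ^ 2 + 1 = excess G v ^ 2 + 2 * G.degree v := by
    rw [degree_eq_excess_add_one hG.connected.preconnected]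
    ring
  have hsum := Finset.sum_congr rfl fun v (_ : v ∈ Finset.univ) => hsq v
  simp only [Finset.sum_add_distrib, ← Finset.mul_sum, Finset.sum_const, Finset.card_univ,
    smul_eq_mul, mul_one] at hsum
  have hdeg := sum_degree_of_isTree hG
  omega

theorem IsColorClass.sum_excess_add_one [DecidableEq V] [Nontrivial V] {A : Finset V}
    (hA : IsColorClass G A) (hG : G.IsTree) : ∑ v ∈ A, excess G v + 1 = Aᶜ.card := by
  have hedges := isBipartiteWith_sum_degrees_eq_card_edges hA.isBipartiteWith
  simp only [degree_eq_excess_add_one hG.connected.preconnected, Finset.sum_add_distrib,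
    Finset.sum_const, smul_eq_mul, mul_one] at hedges
  have hcard := hG.card_edgeFinset
  have hcompl := A.card_add_card_compl
  omega

theorem existsUnique_adj_of_excess_eq_zero [Nontrivial V] (hG : G.Preconnected) {v : V}
    (hv : excess G v = 0) : ∃! w, G.Adj v w := by
  rw [← degree_eq_one_iff_existsUnique_adj, degree_eq_excess_add_one hG, hv]

theorem IsColorClass.adj_iff_notMem_of_degree_eq [DecidableEq V] {A : Finset V}
    (hA : IsColorClass G A) {a : V} (ha : a ∈ A) (hdeg : G.degree a = Aᶜ.card) (b : V) :
    G.Adj a b ↔ b ∉ A := by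
  have hsub : G.neighborFinset a ⊆ Aᶜ := fun b hb =>
    Finset.mem_compl.mpr ((hA ((G.mem_neighborFinset a b).mp hb)).mp ha)
  rw [← mem_neighborFinset, Finset.eq_of_subset_of_card_le hsub hdeg.ge, Finset.mem_compl]

theorem IsColorClass.nonempty_iso_threeStar_of_hasProfile [DecidableEq V] [Nontrivial V]
    {C : Finset V} {r s t : ℕ} (hC : IsColorClass G C) (hG : G.Preconnected)
    (hcardC : C.card = s + t + 1) (hcardCc : Cᶜ.card = r + 2)
    (hprofile : HasProfile C (excess G) (r + 1) 0)
    (hprofile' : HasProfile Cᶜ (excess G) s t) : Nonempty (G ≃g threeStar r s t) := by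
  obtain ⟨c, hc, c', -, -, hcr, hc', hrest⟩ := hprofile
  obtain ⟨x, hx, y, hy, hxy, hxs, -, hrest'⟩ := hprofile'
  rw [Finset.mem_compl] at hx hy
  have hcentre := hC.adj_iff_notMem_of_degree_eq hc
    (by rw [degree_eq_excess_add_one hG, hcr, hcardCc])
  have hleaf {a : V} (ha : a ∈ C) (hac : a ≠ c) : ∃ d, (d = x ∨ d = y) ∧
      ∀ b, G.Adj a b ↔ b = d := by
    have hzero : excess G a = 0 := by
      rcases eq_or_ne a c' with rfl | hac'
      exacts [hc', hrest a ha hac hac']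
    obtain ⟨d, had, hd⟩ := existsUnique_adj_of_excess_eq_zero hG hzero
    refine ⟨d, ?_, fun b => ⟨hd b, fun h => h ▸ had⟩⟩
    by_contra! hdxy
    have hdC := (hC had).mp ha
    have huniq := existsUnique_adj_of_excess_eq_zero hG
      (hrest' d (Finset.mem_compl.mpr hdC) hdxy.1 hdxy.2)
    exact hac (huniq.unique had.symm ((hcentre d).mpr hdC).symm)
  refine nonempty_iso_threeStar (X := (G.neighborFinset x).erase c) hC hc hx hy hxy
    (Finset.erase_subset_erase _ fun a ha => ?_) (fun a ha b hb => ?_) ?_ hcardC hcardCc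
  · exact (hC ((G.mem_neighborFinset x a).mp ha).symm).mpr hx
  · rcases eq_or_ne a c with rfl | hac
    · simp only [hcentre, hb, not_false_eq_true, true_or]
    · obtain ⟨d, hdxy, had⟩ := hleaf ha hac
      simp only [had, Finset.mem_erase, mem_neighborFinset, G.adj_comm x a]
      grind
  · rw [Finset.card_erase_of_mem
        ((G.mem_neighborFinset x c).mpr ((hcentre x).mpr hx).symm),
      card_neighborFinset_eq_degree, degree_eq_excess_add_one hG, hxs, Nat.add_sub_cancel]

end Excess

section Extremal

variable {V : Type*} [Fintype V] {G : SimpleGraph V} [DecidableRel G.Adj] {a b : ℕ}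

theorem IsColorClass.nonempty_iso_threeStar_or_sum_sq_excess_lt [DecidableEq V] {A : Finset V}
    (hA : IsColorClass G A) (hG : G.IsTree) (hab : a < b) (hcardA : A.card = a + 3)
    (hcardAc : Aᶜ.card = b + 3) :
    Nonempty (G ≃g threeStar (b + 1) (a + 2) 0) ∨ Nonempty (G ≃g threeStar (b + 1) (a + 1) 1) ∨
      Nonempty (G ≃g threeStar (a + 1) (b + 1) 1) ∨ Nonempty (G ≃g threeStar (b + 1) a 2) ∨
      ∑ v, excess G v ^ 2 < (b + 2) ^ 2 + a ^ 2 + 4 := by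
  have : Nontrivial V := Fintype.one_lt_card_iff_nontrivial.mp (by
    have := A.card_add_card_compl
    omega)
  have hconn := hG.connected.preconnected
  have hsum : ∑ v ∈ A, excess G v = b + 2 := by
    have := hA.sum_excess_add_one hG
    omega
  have hsum' : ∑ v ∈ Aᶜ, excess G v = a + 2 := by
    have := hA.compl.sum_excess_add_one hG
    rw [compl_compl] at this
    omega
  rw [← Finset.sum_add_sum_compl A]
  rcases hasProfile_or_sum_sq_lt (by omega) hsum with h | h | h
  · have iso {s t : ℕ} := hA.nonempty_iso_threeStar_of_hasProfile (r := b + 1) (s := s)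
      (t := t) hconn
    rcases hasProfile_or_sum_sq_lt (by omega) hsum' with h' | h' | h' | h'
    · exact .inl (iso hcardA hcardAc h h')
    · exact .inr (.inl (iso hcardA hcardAc h h'))
    · exact .inr (.inr (.inr (.inl (iso hcardA hcardAc h h'))))
    · rw [h.sum_sq]
      exact .inr (.inr (.inr (.inr (by omega))))
  · rcases hasProfile_or_sum_sq_lt (by omega) hsum' with h' | h' | h' | h'
    · exact .inr (.inr (.inl (hA.compl.nonempty_iso_threeStar_of_hasProfile hconn hcardAc
        (by rw [compl_compl, hcardA]) h' (by rwa [compl_compl]))))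
    · rw [h.sum_sq, h'.sum_sq]
      exact .inr (.inr (.inr (.inr (by nlinarith))))
    · rw [h.sum_sq, h'.sum_sq]
      exact .inr (.inr (.inr (.inr (by nlinarith))))
    · rw [h.sum_sq]
      exact .inr (.inr (.inr (.inr (by nlinarith))))
  · have hsq : ∑ v ∈ A, excess G v ^ 2 ≤ b ^ 2 + 4 := h.elim (fun h => h.sum_sq.le) le_of_lt
    have hsq' : ∑ v ∈ Aᶜ, excess G v ^ 2 ≤ (a + 2) ^ 2 :=
      hsum' ▸ Finset.sum_sq_le_sq_sum_of_nonneg fun _ _ => Nat.zero_le _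
    exact .inr (.inr (.inr (.inr (by nlinarith))))

theorem sum_sq_degree_lt_of_sum_sq_excess_lt {W : Type*} [Fintype W] {H : SimpleGraph W}
    [DecidableRel H.Adj] [Nontrivial V] (hG : G.IsTree)
    (hsq : ∑ v, excess G v ^ 2 < (b + 2) ^ 2 + a ^ 2 + 4)
    (hcard : Fintype.card V = a + b + 6) (e : H ≃g threeStar (b + 1) a 2) :
    ∑ v, G.degree v ^ 2 < ∑ v, H.degree v ^ 2 := by
  have hstar := sum_degree_of_iso_threeStar e (· ^ 2)
  have hexcess := sum_sq_degree_of_isTree hG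
  nlinarith

end Extremal

theorem stmt_7_general (p q : ℕ) (hp : 3 ≤ p) (hpq : p < q)
    (T : SimpleGraph (Fin (p + q))) (hT : TreeBip p q T)
    (h0 : ¬ Nonempty (T ≃g BTree p q 0 0))
    (h1 : ¬ Nonempty (T ≃g BTree p q 0 1))
    (h2 : ¬ Nonempty (T ≃g DTree p q 0 1))
    (h3 : ¬ Nonempty (T ≃g BTree p q 2 0)) :
    SLt T (BTree p q 2 0) := by
  classical
  obtain ⟨hT, A, hcardA, hA : IsColorClass T A⟩ := hT
  obtain ⟨a, rfl⟩ := Nat.exists_eq_add_of_le' hp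
  obtain ⟨b, rfl⟩ := Nat.exists_eq_add_of_le' (hp.trans hpq.le)
  have hcardAc : Aᶜ.card = b + 3 := by
    rw [Finset.card_compl, hcardA, Fintype.card_fin, Nat.add_sub_cancel_left]
  have not_iso {n r s t : ℕ} {B : SimpleGraph (Fin n)} (hB : Nonempty (B ≃g threeStar r s t))
      (hTB : ¬ Nonempty (T ≃g B)) : ¬ Nonempty (T ≃g threeStar r s t) :=
    mt (fun ⟨f⟩ => hB.map fun g => f.trans g.symm) hTB
  obtain ⟨e⟩ : Nonempty (BTree (a + 3) (b + 3) 2 0 ≃g threeStar (b + 1) a 2) :=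
    nonempty_BTree_iso_threeStar (b + 1) a 2
  have hsq := hA.nonempty_iso_threeStar_or_sum_sq_excess_lt hT (by omega) hcardA hcardAc
    |>.resolve_left (not_iso (nonempty_BTree_iso_threeStar (b + 1) (a + 2) 0) h0)
    |>.resolve_left (not_iso (nonempty_BTree_zero_one_iso_threeStar b (a + 1)) h1)
    |>.resolve_left (not_iso (nonempty_DTree_zero_one_iso_threeStar a (b + 1)) h2)
    |>.resolve_left (not_iso ⟨e⟩ h3)
  have hdeg : ∑ v, T.degree v = ∑ v, (BTree (a + 3) (b + 3) 2 0).degree v := by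
    have hstar := sum_degree_of_iso_threeStar e id
    have htree := sum_degree_of_isTree hT
    simp only [id, Fintype.card_fin] at hstar htree
    omega
  refine sLt_of_isAcyclic_of_sum_sq_degree_lt hT.isAcyclic (by rw [Fintype.card_fin]; omega) hdeg ?_
  exact sum_sq_degree_lt_of_sum_sq_excess_lt hT hsq (by rw [Fintype.card_fin]; omega) e

/-- For `4 ≤ p < q`, `n = p + q` and `2p > q + 4`, every tree
`T ∈ 𝒯_n^{p,q}` isomorphic to none of `B_{p,q}^{0,0}`, `B_{p,q}^{0,1}`,
`D_{p,q}^{0,1}`, `B_{p,q}^{2,0}` satisfies `T ≺_s B_{p,q}^{2,0}`: in this case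
`B_{p,q}^{2,0}` is the unique fourth last tree in the S-order among `𝒯_n^{p,q}`. -/
theorem stmt_7 (p q : ℕ) (hp : 4 ≤ p) (hpq : p < q) (h : q + 4 < 2 * p)
    (T : SimpleGraph (Fin (p + q))) (hT : TreeBip p q T)
    (h0 : ¬ Nonempty (T ≃g BTree p q 0 0))
    (h1 : ¬ Nonempty (T ≃g BTree p q 0 1))
    (h2 : ¬ Nonempty (T ≃g DTree p q 0 1))
    (h3 : ¬ Nonempty (T ≃g BTree p q 2 0)) :
    SLt T (BTree p q 2 0) := by
  exact stmt_7_general p q (by omega) hpq T hT h0 h1 h2 h3
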